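/- arXiv:2512.12446 — 4 statements merged into one kernel-verified Lean document; each statement's English description precedes it below -/
import Mathlib

section
/- Let n ≥ 3 be a finite natural number and adopt the cylindric set algebra setting over a base set V. Let i ≠ j < n and let a, b ∈ A be atoms of A with a ⊆ d_ij and b ⊆ d_ij. Then either (dom_i(a) = dom_i(b) and dom_j(a) = dom_j(b)) or (dom_i(a) ∩ dom_i(b) = ∅ and dom_j(a) ∩ dom_j(b) = ∅). -/
/-- Cylindrification: `C_i(R) = {s : s(i/u) ∈ R for some u}`. -/
def cyl {n : ℕ} {V : Type} (i : Fin n) (R : Set (Fin n → V)) : Set (Fin n → V) :=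
  {s | ∃ u : V, Function.update s i u ∈ R}

/-- `dom_i(R) = {s(i) : s ∈ R}`. -/
def domAt {n : ℕ} {V : Type} (i : Fin n) (R : Set (Fin n → V)) : Set V :=
  (fun s => s i) '' R

/-- Cylindrification along all the coordinates in `S`. -/
def cylFinset {n : ℕ} {V : Type} (S : Finset (Fin n)) (R : Set (Fin n → V)) :
    Set (Fin n → V) :=
  {s | ∃ t ∈ R, ∀ k, k ∉ S → t k = s k}

theorem cylFinset_empty {n : ℕ} {V : Type} (R : Set (Fin n → V)) :
    cylFinset ∅ R = R := by
  ext s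
  constructor
  · rintro ⟨t, ht, h⟩
    have hts : t = s := funext fun k => h k (by simp)
    exact hts ▸ ht
  · exact fun hs => ⟨s, hs, fun _ _ => rfl⟩

theorem cylFinset_insert {n : ℕ} {V : Type} (k : Fin n) (S : Finset (Fin n))
    (R : Set (Fin n → V)) : cylFinset (insert k S) R = cyl k (cylFinset S R) := by
  ext s
  constructor
  · rintro ⟨t, ht, h⟩
    refine ⟨t k, t, ht, fun l hl => ?_⟩
    by_cases hlk : l = k
    · simp [hlk]
    · rw [Function.update_of_ne hlk]
      exact h l (by simp [hlk, hl])
  · rintro ⟨u, t, ht, h⟩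
    refine ⟨t, ht, fun l hl => ?_⟩
    rw [Finset.mem_insert, not_or] at hl
    rw [h l hl.2, Function.update_of_ne hl.1]

theorem cyl_cyl {n : ℕ} {V : Type} (k : Fin n) (R : Set (Fin n → V)) :
    cyl k (cyl k R) = cyl k R := by
  ext s
  simpa [cyl] using fun u _ => ⟨u⟩

theorem cyl_mono {n : ℕ} {V : Type} (k : Fin n) {R R' : Set (Fin n → V)} (h : R ⊆ R') :
    cyl k R ⊆ cyl k R' :=
  fun _ ⟨u, hu⟩ => ⟨u, h hu⟩

theorem cylFinset_mem {n : ℕ} {V : Type} {A : Set (Set (Fin n → V))}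
    (hcyl : ∀ (i : Fin n), ∀ x ∈ A, cyl i x ∈ A) (S : Finset (Fin n))
    {R : Set (Fin n → V)} (hR : R ∈ A) : cylFinset S R ∈ A := by
  induction S using Finset.induction_on with
  | empty => rwa [cylFinset_empty]
  | insert k S _ ih =>
    rw [cylFinset_insert]
    exact hcyl k _ ih

theorem cylFinset_subset {n : ℕ} {V : Type} (S : Finset (Fin n)) {R : Set (Fin n → V)}
    (hR : ∀ k ∈ S, cyl k R ⊆ R) : cylFinset S R ⊆ R := by
  induction S using Finset.induction_on with
  | empty => rw [cylFinset_empty]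
  | insert k S _ ih =>
    rw [cylFinset_insert]
    exact (cyl_mono k (ih fun l hl => hR l (Finset.mem_insert_of_mem hl))).trans
      (hR k (Finset.mem_insert_self k S))

theorem preimage_domAt_mem {n : ℕ} {V : Type} {A : Set (Set (Fin n → V))}
    (hcyl : ∀ (i : Fin n), ∀ x ∈ A, cyl i x ∈ A) (i : Fin n)
    {R : Set (Fin n → V)} (hR : R ∈ A) : {s | s i ∈ domAt i R} ∈ A := by
  convert cylFinset_mem hcyl (Finset.univ.erase i) hR using 1
  ext s
  simp [domAt, cylFinset]

theorem inter_mem_of_union_compl {α : Type*} {A : Set (Set α)}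
    (hunion : ∀ x ∈ A, ∀ y ∈ A, x ∪ y ∈ A) (hcompl : ∀ x ∈ A, xᶜ ∈ A)
    {x y : Set α} (hx : x ∈ A) (hy : y ∈ A) : x ∩ y ∈ A := by
  have h := hcompl _ (hunion _ (hcompl x hx) _ (hcompl y hy))
  rwa [Set.compl_union, compl_compl, compl_compl] at h

/-- If the `i`-th domain of an element meets that of an atom, it contains it. -/
theorem domAt_subset_of_inter_nonempty {n : ℕ} {V : Type} {A : Set (Set (Fin n → V))}
    (hunion : ∀ x ∈ A, ∀ y ∈ A, x ∪ y ∈ A) (hcompl : ∀ x ∈ A, xᶜ ∈ A)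
    (hcyl : ∀ (i : Fin n), ∀ x ∈ A, cyl i x ∈ A) (i : Fin n) {a b : Set (Fin n → V)}
    (haA : a ∈ A) (hbA : b ∈ A) (hbmin : ∀ x ∈ A, x ≠ ∅ → x ⊆ b → x = b)
    (h : (domAt i a ∩ domAt i b).Nonempty) : domAt i b ⊆ domAt i a := by
  obtain ⟨_, hv, t, ht, rfl⟩ := h
  have hb := hbmin _
    (inter_mem_of_union_compl hunion hcompl (preimage_domAt_mem hcyl i haA) hbA)
    (Set.Nonempty.ne_empty ⟨t, hv, ht⟩) Set.inter_subset_right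
  rintro _ ⟨s, hs, rfl⟩
  rw [← hb] at hs
  exact hs.1

theorem diagonal_subset_swap {n : ℕ} {V : Type} {A : Set (Set (Fin n → V))}
    {d : Fin n → Fin n → Set (Fin n → V)} (hdA : ∀ i j : Fin n, d i j ∈ A)
    (hC5 : ∀ i : Fin n, d i i = Set.univ)
    (hC6 : ∀ i j k : Fin n, k ≠ i → k ≠ j → d i j = cyl k (d i k ∩ d k j))
    (hC7 : ∀ i j : Fin n, i ≠ j → ∀ x ∈ A, cyl i (d i j ∩ x) ∩ cyl i (d i j ∩ xᶜ) = ∅)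
    {i j : Fin n} (hij : i ≠ j) : d i j ⊆ d j i := by
  intro s hs
  by_contra hns
  have h₁ : s ∈ cyl i (d i j ∩ d j i) := by
    rw [Set.inter_comm, ← hC6 j j i hij hij, hC5]
    trivial
  have h₂ : s ∈ cyl i (d i j ∩ (d j i)ᶜ) := ⟨s i, by simpa using ⟨hs, hns⟩⟩
  exact (hC7 i j hij _ (hdA j i)).subset ⟨h₁, h₂⟩

/-- Membership in `d i j` depends only on the coordinates `i` and `j`. -/
theorem mem_diagonal_of_eq {n : ℕ} {V : Type} {d : Fin n → Fin n → Set (Fin n → V)}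
    (hC6 : ∀ i j k : Fin n, k ≠ i → k ≠ j → d i j = cyl k (d i k ∩ d k j))
    {i j : Fin n} {s t : Fin n → V} (hs : s ∈ d i j) (hi : s i = t i) (hj : s j = t j) :
    t ∈ d i j := by
  refine cylFinset_subset ((Finset.univ.erase i).erase j) (fun k hk => ?_) ⟨s, hs, fun k hk => ?_⟩
  · simp only [Finset.mem_erase, Finset.mem_univ, and_true] at hk
    rw [hC6 i j k hk.2 hk.1, cyl_cyl]
  · by_cases hkj : k = j
    · rw [hkj, hj]
    · by_cases hki : k = i
      · rw [hki, hi]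
      · simp [hkj, hki] at hk

/-- Elements below `d i j` whose `i`-th domains meet have `j`-th domains that meet. -/
theorem domAt_inter_nonempty_of_subset_diagonal {n : ℕ} {V : Type}
    {A : Set (Set (Fin n → V))} (hcyl : ∀ (i : Fin n), ∀ x ∈ A, cyl i x ∈ A)
    {d : Fin n → Fin n → Set (Fin n → V)}
    (hC6 : ∀ i j k : Fin n, k ≠ i → k ≠ j → d i j = cyl k (d i k ∩ d k j))
    (hC7 : ∀ i j : Fin n, i ≠ j → ∀ x ∈ A, cyl i (d i j ∩ x) ∩ cyl i (d i j ∩ xᶜ) = ∅)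
    {i j : Fin n} (hij : i ≠ j) {a b : Set (Fin n → V)} (haA : a ∈ A)
    (had : a ⊆ d j i) (hbd : b ⊆ d j i)
    (h : (domAt i a ∩ domAt i b).Nonempty) : (domAt j a ∩ domAt j b).Nonempty := by
  obtain ⟨_, ⟨s, hs, rfl⟩, t, ht, hts⟩ := h
  refine ⟨t j, ?_, t, ht, rfl⟩
  by_contra htX
  have h₁ : t ∈ cyl j (d j i ∩ {s | s j ∈ domAt j a}) := by
    refine ⟨s j, mem_diagonal_of_eq hC6 (had hs) (by simp) ?_, s, hs, by simp⟩
    rw [Function.update_of_ne hij]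
    exact hts.symm
  have h₂ : t ∈ cyl j (d j i ∩ {s | s j ∈ domAt j a}ᶜ) :=
    ⟨t j, by simpa using ⟨hbd ht, htX⟩⟩
  exact (hC7 j i hij.symm _ (preimage_domAt_mem hcyl j haA)).subset ⟨h₁, h₂⟩

/-- Lemma (dom-particio): in a cylindric set algebra over `V`, if `a, b` are atoms
below `d_ij` (`i ≠ j`), then their `i`-th and `j`-th domains are either equal or
disjoint (simultaneously). -/
theorem stmt14 {n : ℕ} (hn : 3 ≤ n) {V : Type}
    (A : Set (Set (Fin n → V)))
    (hunion : ∀ x ∈ A, ∀ y ∈ A, x ∪ y ∈ A)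
    (hcompl : ∀ x ∈ A, xᶜ ∈ A)
    (hempty : (∅ : Set (Fin n → V)) ∈ A)
    (huniv : (Set.univ : Set (Fin n → V)) ∈ A)
    (hcyl : ∀ (i : Fin n), ∀ x ∈ A, cyl i x ∈ A)
    (d : Fin n → Fin n → Set (Fin n → V))
    (hdA : ∀ i j : Fin n, d i j ∈ A)
    (hC5 : ∀ i : Fin n, d i i = Set.univ)
    (hC6 : ∀ i j k : Fin n, k ≠ i → k ≠ j → d i j = cyl k (d i k ∩ d k j))
    (hC7 : ∀ i j : Fin n, i ≠ j → ∀ x ∈ A, cyl i (d i j ∩ x) ∩ cyl i (d i j ∩ xᶜ) = ∅)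
    (i j : Fin n) (hij : i ≠ j)
    (a b : Set (Fin n → V)) (haA : a ∈ A) (hbA : b ∈ A)
    (hane : a ≠ ∅) (hamin : ∀ x ∈ A, x ≠ ∅ → x ⊆ a → x = a)
    (hbne : b ≠ ∅) (hbmin : ∀ x ∈ A, x ≠ ∅ → x ⊆ b → x = b)
    (had : a ⊆ d i j) (hbd : b ⊆ d i j) :
    (domAt i a = domAt i b ∧ domAt j a = domAt j b) ∨
    (domAt i a ∩ domAt i b = ∅ ∧ domAt j a ∩ domAt j b = ∅) := by
  have hsub := diagonal_subset_swap hdA hC5 hC6 hC7 hij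
  have heq : ∀ k, (domAt k a ∩ domAt k b).Nonempty → domAt k a = domAt k b := fun k h =>
    Set.Subset.antisymm
      (domAt_subset_of_inter_nonempty hunion hcompl hcyl k hbA haA hamin
        (Set.inter_comm _ _ ▸ h))
      (domAt_subset_of_inter_nonempty hunion hcompl hcyl k haA hbA hbmin h)
  by_cases h : (domAt i a ∩ domAt i b).Nonempty
  · exact Or.inl ⟨heq i h, heq j (domAt_inter_nonempty_of_subset_diagonal hcyl hC6 hC7 hij haA
      (had.trans hsub) (hbd.trans hsub) h)⟩
  · refine Or.inr ⟨Set.not_nonempty_iff_eq_empty.mp h, Set.not_nonempty_iff_eq_empty.mp fun h' => ?_⟩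
    exact h (domAt_inter_nonempty_of_subset_diagonal hcyl hC6 hC7 hij.symm haA had hbd h')
end

section
/- Let n ≥ 1 be a natural number, let U be a set, let W be a finite nonempty commutative group, and let V = U × W. For s : Fin n → U and w : Fin n → W let s×w : Fin n → V be the function i ↦ (s(i), w(i)), and let ŝ = {s×w : w : Fin n → W} ⊆ ^nV. Then for every s : Fin n → U there exists a family (s_σ)_{σ ∈ W} of pairwise disjoint nonempty subsets of ^nV whose union is ŝ, such that C_i(s_σ) = C_i(ŝ) for every σ ∈ W and every i < n. -/
/-- The blow-up `ŝ = {s×w : w : Fin n → W}` of a sequence `s : Fin n → U`. -/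
def shat {n : ℕ} {U W : Type} (s : Fin n → U) : Set (Fin n → U × W) :=
  {t | ∃ w : Fin n → W, t = fun i => (s i, w i)}

theorem mem_shat {n : ℕ} {U W : Type} {s : Fin n → U} {t : Fin n → U × W} :
    t ∈ shat s ↔ ∀ i, (t i).1 = s i := by
  constructor
  · rintro ⟨w, rfl⟩ i
    rfl
  · intro h
    exact ⟨fun i => (t i).2, funext fun i => Prod.ext (h i) rfl⟩

theorem exists_prod_update_eq {ι W : Type*} [Fintype ι] [DecidableEq ι] [CommGroup W]
    (f : ι → W) (i : ι) (σ : W) : ∃ w, ∏ j, Function.update f i w j = σ :=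
  ⟨σ * (∏ j ∈ Finset.univ \ {i}, f j)⁻¹, by
    rw [Finset.prod_update_of_mem (Finset.mem_univ i), inv_mul_cancel_right]⟩

/-- Lemma: for a finite commutative group `W` and `n ≥ 1`, the blow-up `ŝ` of any
sequence `s : Fin n → U` can be partitioned into `|W|` pairwise disjoint nonempty
pieces `s_σ` (`σ ∈ W`) such that `C_i(s_σ) = C_i(ŝ)` for all `σ` and `i`. -/
theorem stmt17 (n : ℕ) (hn : 1 ≤ n) (U W : Type) [Fintype W] [CommGroup W] :
    ∀ s : Fin n → U,
      ∃ g : W → Set (Fin n → U × W),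
        (∀ σ τ : W, σ ≠ τ → g σ ∩ g τ = ∅) ∧
        (∀ σ : W, (g σ).Nonempty) ∧
        (⋃ σ : W, g σ) = shat s ∧
        (∀ (σ : W) (i : Fin n), cyl i (g σ) = cyl i (shat s : Set (Fin n → U × W))) := by
  intro s
  refine ⟨fun σ => {t | t ∈ shat s ∧ ∏ j, (t j).2 = σ}, ?_, ?_, ?_, ?_⟩
  · rintro σ τ hne
    ext t
    simp only [Set.mem_inter_iff, Set.mem_ofPred_eq, Set.mem_empty_iff_false, iff_false]
    rintro ⟨⟨-, rfl⟩, -, h⟩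
    exact hne h
  · intro σ
    obtain ⟨w, hw⟩ := exists_prod_update_eq (1 : Fin n → W) ⟨0, hn⟩ σ
    exact ⟨_, ⟨_, rfl⟩, hw⟩
  · ext t
    simp
  · intro σ i
    ext t
    constructor
    · rintro ⟨u, hu, -⟩
      exact ⟨u, hu⟩
    · rintro ⟨u, hu⟩
      rw [mem_shat] at hu
      obtain ⟨w, hw⟩ := exists_prod_update_eq (fun j => (t j).2) i σ
      refine ⟨(s i, w), mem_shat.2 fun j => ?_, ?_⟩
      · have hj := hu j
        by_cases h : j = i
        · subst h
          simp
        · simpa [h] using hj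
      · rw [← hw]
        refine Finset.prod_congr rfl fun j _ => ?_
        by_cases h : j = i
        · subst h
          simp
        · simp [h]
end

section
/- Let n be a natural number, let i ≠ j < n, let V be a set, and let A ⊆ 𝒫(^nV) be closed under complement and intersection and under C_i. Let d ∈ A be such that D_ij ⊆ d and such that C_i(d ∩ x) ∩ C_i(d ∩ xᶜ) = ∅ for every x ∈ A. Then for every a ∈ A with a ⊆ d one has C_i(a) = S_ij(a), and consequently C_i(x ∩ d) = S_ij(x) for every x ∈ A; that is, the derived substitution x ↦ C_i(x ∩ d) coincides on A with the set-theoretic substitution S_ij. -/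
/-- Substitution: `S_ij(R) = {s : s(i/s(j)) ∈ R}`. -/
def subst {n : ℕ} {V : Type} (i j : Fin n) (R : Set (Fin n → V)) : Set (Fin n → V) :=
  {s | Function.update s i (s j) ∈ R}

/-- Diagonal: `D_ij = {s : s(i) = s(j)}`. -/
def diag {n : ℕ} (V : Type) (i j : Fin n) : Set (Fin n → V) :=
  {s | s i = s j}

/-- Lemma: if `A` is closed under complement, intersection and `C_i`, and `d ∈ A`
contains the diagonal `D_ij` and satisfies the C7-style axiom for all `x ∈ A`, then
`C_i(a) = S_ij(a)` for all `a ∈ A` with `a ⊆ d`, and the derived substitution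
`x ↦ C_i(x ∩ d)` coincides with `S_ij` on `A`. -/
theorem stmt18 (n : ℕ) (i j : Fin n) (hij : i ≠ j) {V : Type}
    (A : Set (Set (Fin n → V)))
    (hcompl : ∀ x ∈ A, xᶜ ∈ A)
    (hinter : ∀ x ∈ A, ∀ y ∈ A, x ∩ y ∈ A)
    (hcyl : ∀ x ∈ A, cyl i x ∈ A)
    (d : Set (Fin n → V)) (hdA : d ∈ A)
    (hdiag : diag V i j ⊆ d)
    (hC7 : ∀ x ∈ A, cyl i (d ∩ x) ∩ cyl i (d ∩ xᶜ) = ∅) :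
    (∀ a ∈ A, a ⊆ d → cyl i a = subst i j a) ∧
    (∀ x ∈ A, cyl i (x ∩ d) = subst i j x) := by
  have hdiag_update (s : Fin n → V) : Function.update s i (s j) ∈ d :=
    hdiag (by simp [diag, Function.update_of_ne hij.symm])
  have hsubst : ∀ x ∈ A, cyl i (x ∩ d) = subst i j x := by
    intro x hx
    ext s
    constructor
    · rintro ⟨u, hux, hud⟩
      by_contra hs
      have hmem : s ∈ cyl i (d ∩ x) ∩ cyl i (d ∩ xᶜ) :=
        ⟨⟨u, hud, hux⟩, ⟨s j, hdiag_update s, hs⟩⟩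
      rw [hC7 x hx] at hmem
      exact hmem
    · exact fun hs => ⟨s j, hs, hdiag_update s⟩
  refine ⟨fun a ha had => ?_, hsubst⟩
  rw [← hsubst a ha, Set.inter_eq_left.mpr had]
end

section
/- Let n : ℕ, let U be a set, let W be a nonempty set, and let V = U × W. For s : Fin n → U and w : Fin n → W let s×w : Fin n → V be the function i ↦ (s(i), w(i)). Define F : 𝒫(^nU) → 𝒫(^nV) by F(X) = {s×w : s ∈ X, w : Fin n → W}. Then F is injective and satisfies, for all X, Y ⊆ ^nU, all families (X_k) of subsets of ^nU, and all i, j < n: F(X ∪ Y) = F(X) ∪ F(Y); F(Xᶜ) = F(X)ᶜ; F(⋃_k X_k) = ⋃_k F(X_k); F(C_i^U(X)) = C_i^V(F(X)); F(S_ij^U(X)) = S_ij^V(F(X)); and F(P_ij(X)) = P_ij(F(X)). -/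
/-- Transposition: `P_ij(R) = {s : s(i/s(j))(j/s(i)) ∈ R}`. -/
def transp {n : ℕ} {V : Type} (i j : Fin n) (R : Set (Fin n → V)) : Set (Fin n → V) :=
  {s | Function.update (Function.update s i (s j)) j (s i) ∈ R}

/-- The blow-up embedding `F(X) = {s×w : s ∈ X, w : Fin n → W} ⊆ 𝒫(ⁿ(U×W))`. -/
def Fmap {n : ℕ} {U W : Type} (X : Set (Fin n → U)) : Set (Fin n → U × W) :=
  {t | ∃ s ∈ X, ∃ w : Fin n → W, t = fun i => (s i, w i)}

/-- A point lies in `Fmap X` exactly when its first projection lies in `X`. -/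
theorem mem_Fmap_iff {n : ℕ} {U W : Type} {X : Set (Fin n → U)} {t : Fin n → U × W} :
    t ∈ Fmap X ↔ Prod.fst ∘ t ∈ X := by
  constructor
  · rintro ⟨s, hs, w, rfl⟩
    exact hs
  · intro h
    exact ⟨_, h, Prod.snd ∘ t, rfl⟩

/-- `Fmap X` is the preimage of `X` under the first projection. -/
theorem Fmap_eq_preimage {n : ℕ} {U W : Type} (X : Set (Fin n → U)) :
    (Fmap X : Set (Fin n → U × W)) = (Prod.fst ∘ ·) ⁻¹' X :=
  Set.ext fun _ => mem_Fmap_iff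

/-- Lemma: the blow-up map `F : 𝒫(ⁿU) → 𝒫(ⁿ(U×W))` (`W` nonempty) is injective and
preserves union, complement, arbitrary unions, cylindrifications, substitutions and
transpositions. -/
theorem stmt19 (n : ℕ) (U W : Type) [Nonempty W] :
    Function.Injective (Fmap : Set (Fin n → U) → Set (Fin n → U × W)) ∧
    (∀ X Y : Set (Fin n → U),
      (Fmap (X ∪ Y) : Set (Fin n → U × W)) = Fmap X ∪ Fmap Y) ∧
    (∀ X : Set (Fin n → U), (Fmap Xᶜ : Set (Fin n → U × W)) = (Fmap X)ᶜ) ∧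
    (∀ (ι : Type) (X : ι → Set (Fin n → U)),
      (Fmap (⋃ k, X k) : Set (Fin n → U × W)) = ⋃ k, Fmap (X k)) ∧
    (∀ (i : Fin n) (X : Set (Fin n → U)),
      (Fmap (cyl i X) : Set (Fin n → U × W)) = cyl i (Fmap X)) ∧
    (∀ (i j : Fin n) (X : Set (Fin n → U)),
      (Fmap (subst i j X) : Set (Fin n → U × W)) = subst i j (Fmap X)) ∧
    (∀ (i j : Fin n) (X : Set (Fin n → U)),
      (Fmap (transp i j X) : Set (Fin n → U × W)) = transp i j (Fmap X)) := by
  refine ⟨fun X Y h => ?_, fun X Y => ?_, fun X => ?_, fun ι X => ?_, fun i X => ?_,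
    fun i j X => ?_, fun i j X => ?_⟩
  · have hsurj : Function.Surjective (fun t : Fin n → U × W => Prod.fst ∘ t) :=
      Prod.fst_surjective.comp_left
    rw [Fmap_eq_preimage, Fmap_eq_preimage] at h
    exact hsurj.preimage_injective h
  · simp only [Fmap_eq_preimage, Set.preimage_union]
  · simp only [Fmap_eq_preimage, Set.preimage_compl]
  · simp only [Fmap_eq_preimage, Set.preimage_iUnion]
  · ext t
    simp [cyl, mem_Fmap_iff, Function.comp_update]
  · ext t
    simp [subst, mem_Fmap_iff, Function.comp_update]
  · ext t
    simp [transp, mem_Fmap_iff, Function.comp_update]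
end
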